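/- Let (V, λ) be a nonsingular symmetric bilinear form over ℤ/2 on a finite-dimensional vector space, q a ℤ/4-valued quadratic enhancement of λ, t ∈ V, and define q' : V → ℤ/4 by q'(x) = q(x) + ι(λ(x,t)). Then q' is again a ℤ/4-valued quadratic enhancement of λ, and (∑_{x∈V} i^{q'(x)}) · i^{q(t)} = ∑_{x∈V} i^{q(x)}. (In terms of Brown–Kervaire invariants: BK(V,λ,q) − BK(V,λ,q') = 2·q(t) ∈ ℤ/8.) -/

import Mathlib

/-!
Since `ι` is additive, `x ↦ ι(λ(x,t))` is a homomorphism, so adding it to `q` does not change the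
associated form. For the Gauss sums, the defining identity of `q` reads `q'(x) + q(t) = q(x + t)`,
so multiplying `∑ i^{q'(x)}` by `i^{q(t)}` reindexes the Gauss sum of `q` by the translation
`x ↦ x + t`.
-/

/-- The additive injection `ℤ/2 → ℤ/4` sending `1` to `2`. -/
def iota : ZMod 2 → ZMod 4 := fun a => 2 * (a.val : ZMod 4)

theorem iota_add (a b : ZMod 2) : iota (a + b) = iota a + iota b := by
  revert a b
  decide

/-- The exponential `a ↦ i ^ a` on representatives is additive because `i ^ 4 = 1`. -/
theorem I_pow_val_add (a b : ZMod 4) :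
    Complex.I ^ (a + b).val = Complex.I ^ a.val * Complex.I ^ b.val := by
  rw [← pow_add, ZMod.val_add, ← Complex.I_pow_eq_pow_mod]

/-- Modifying a `ℤ/4`-valued quadratic enhancement `q` by the linear map `x ↦ ι(λ(x,t))`
yields another enhancement `q'` of the same form, and the Gauss sums satisfy
`(∑ i^{q'(x)}) · i^{q(t)} = ∑ i^{q(x)}`, i.e. `BK(q) − BK(q') = 2·q(t) ∈ ℤ/8`. -/
theorem gauss_sum_of_modified_enhancement
    {V : Type*} [AddCommGroup V] [Module (ZMod 2) V] [FiniteDimensional (ZMod 2) V]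
    [Fintype V]
    (l : V →ₗ[ZMod 2] V →ₗ[ZMod 2] ZMod 2)
    (hsymm : ∀ x y : V, l x y = l y x)
    (hnonsing : Function.Bijective fun x : V => l x)
    (q : V → ZMod 4)
    (hq : ∀ x y : V, q (x + y) = q x + q y + iota (l x y))
    (t : V) (q' : V → ZMod 4)
    (hq' : ∀ x : V, q' x = q x + iota (l x t)) :
    (∀ x y : V, q' (x + y) = q' x + q' y + iota (l x y)) ∧
    (∑ x : V, Complex.I ^ (q' x).val) * Complex.I ^ (q t).val =
      ∑ x : V, Complex.I ^ (q x).val := by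
  constructor
  · intro x y
    rw [hq', hq', hq', hq, map_add, LinearMap.add_apply, iota_add]
    ring
  · rw [Finset.sum_mul, ← Equiv.sum_comp (Equiv.addRight t) fun x => Complex.I ^ (q x).val]
    refine Finset.sum_congr rfl fun x _ => ?_
    rw [← I_pow_val_add, Equiv.coe_addRight, hq, hq', add_right_comm]
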